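/- Let w be a compatible weight system on cubes of [0,∞)^s induced from w_0 as w(□) = max of w_0 over vertices. Suppose R₂ ⊆ R₁ are lattice rectangles and there is a sequence of one-step coordinate contractions from R₁ to R₂ along which w_0 is non-increasing in the sense of Lemma 4.2 (for each deleted slice in direction j, w_0(l) ≥ w_0(l - E_j) for all deleted lattice points l). Then for every N the inclusion S_N(R₂) ⊆ S_N(R₁) is a homotopy equivalence (indeed a deformation retract), hence H^*(R₁, w) ≅ H^*(R₂, w). -/

import Mathlib

open Classical

noncomputable section

/-- A cube of the lattice `ℤ^s`. -/
structure Cub (s : ℕ) where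
  base : Fin s → ℤ
  dirs : Finset (Fin s)

/-- The weight of a cube: the maximum of `w0` over its vertices. -/
def wt {s : ℕ} (w0 : (Fin s → ℤ) → ℤ) (c : Cub s) : ℤ :=
  c.dirs.powerset.sup' ⟨∅, Finset.empty_mem_powerset _⟩
    (fun K => w0 (c.base + ∑ j ∈ K, Pi.single j 1))

/-- The topological realization of a cube inside `ℝ^s`. -/
def cubeSet {s : ℕ} (c : Cub s) : Set (Fin s → ℝ) :=
  {x | ∀ i, (c.base i : ℝ) ≤ x i ∧
        x i ≤ (c.base i : ℝ) + (if i ∈ c.dirs then 1 else 0)}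

/-- The cube lies in the rectangle `R(0,T)`. -/
def inRect {s : ℕ} (T : Fin s → ℕ) (c : Cub s) : Prop :=
  ∀ i, 0 ≤ c.base i ∧ c.base i + (if i ∈ c.dirs then 1 else 0) ≤ (T i : ℤ)

/-- `S_N(R)`: the union of all cubes of the rectangle `R = R(0,T)` of weight `≤ N`. -/
def SN {s : ℕ} (w0 : (Fin s → ℤ) → ℤ) (T : Fin s → ℕ) (N : ℤ) : Set (Fin s → ℝ) :=
  ⋃ c ∈ {c : Cub s | inRect T c ∧ wt w0 c ≤ N}, cubeSet c

lemma wt_le_iff {s : ℕ} (w0 : (Fin s → ℤ) → ℤ) (c : Cub s) (N : ℤ) :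
    wt w0 c ≤ N ↔ ∀ K, K ⊆ c.dirs → w0 (c.base + ∑ j ∈ K, Pi.single j 1) ≤ N := by
  refine (Finset.sup'_le_iff _ _).trans ?_
  simp only [Finset.mem_powerset]

lemma mem_SN {s : ℕ} {w0 : (Fin s → ℤ) → ℤ} {T : Fin s → ℕ} {N : ℤ} {x : Fin s → ℝ} :
    x ∈ SN w0 T N ↔ ∃ c : Cub s, inRect T c ∧ wt w0 c ≤ N ∧ x ∈ cubeSet c := by
  simp only [SN, Set.mem_iUnion, Set.mem_ofPred_eq, exists_prop, and_assoc]

lemma SN_mono {s : ℕ} {w0 : (Fin s → ℤ) → ℤ} {T T' : Fin s → ℕ} {N : ℤ}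
    (h : ∀ i, T' i ≤ T i) : SN w0 T' N ⊆ SN w0 T N := by
  intro x hx
  rw [mem_SN] at hx ⊢
  obtain ⟨c, hc, hw, hx⟩ := hx
  refine ⟨c, fun i => ⟨(hc i).1, (hc i).2.trans ?_⟩, hw, hx⟩
  exact_mod_cast h i

lemma sum_single_apply {s : ℕ} (K : Finset (Fin s)) (i : Fin s) :
    (∑ j ∈ K, (Pi.single j 1 : Fin s → ℤ)) i = if i ∈ K then 1 else 0 := by
  rw [Finset.sum_apply]
  simp [Pi.single_apply]

/-- A point of `S_N` strictly above the lower slice lies in a cube of weight `≤ N` which is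
a product with the last unit interval in the direction `j`. -/
lemma exists_thick {s : ℕ} {w0 : (Fin s → ℤ) → ℤ} {T T' : Fin s → ℕ} {j : Fin s}
    (hj : T j = T' j + 1)
    (hw : ∀ l : Fin s → ℤ, (∀ t, 0 ≤ l t ∧ l t ≤ (T t : ℤ)) →
        l j = (T j : ℤ) → w0 (l - Pi.single j 1) ≤ w0 l)
    {N : ℤ} {x : Fin s → ℝ} (hx : x ∈ SN w0 T N) (hxj : (T' j : ℝ) < x j) :
    ∃ c : Cub s, inRect T c ∧ wt w0 c ≤ N ∧ x ∈ cubeSet c ∧ c.base j = T' j ∧ j ∈ c.dirs := by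
  obtain ⟨c, hc, hwt, hxc⟩ := mem_SN.1 hx
  have h1 := hc j
  have h2 := hxc j
  by_cases hjd : j ∈ c.dirs
  · refine ⟨c, hc, hwt, hxc, ?_, hjd⟩
    simp only [hjd, if_true] at h1 h2
    have h3 : ((T' j : ℤ) : ℝ) < ((c.base j + 1 : ℤ) : ℝ) := by
      push_cast
      linarith [h2.2]
    have h4 : (T' j : ℤ) < c.base j + 1 := by exact_mod_cast h3
    omega
  · simp only [hjd, if_false, add_zero] at h1 h2
    have h3 : ((T' j : ℤ) : ℝ) < ((c.base j : ℤ) : ℝ) := by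
      push_cast
      linarith [h2.2]
    have h4 : (T' j : ℤ) < c.base j := by exact_mod_cast h3
    have h5 : c.base j = T' j + 1 := by omega
    refine ⟨⟨c.base - Pi.single j 1, insert j c.dirs⟩, ?_, ?_, ?_, ?_, ?_⟩
    · intro i
      by_cases hij : i = j
      · subst hij
        simp
        omega
      · simpa [hij] using hc i
    · rw [wt_le_iff] at hwt ⊢
      intro K hK
      simp only at hK ⊢
      by_cases hjK : j ∈ K
      · have := hwt (K.erase j) (by
          intro a ha
          have := hK (Finset.mem_of_mem_erase ha)
          have hne := Finset.ne_of_mem_erase ha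
          simpa [hne] using this)
        rw [← Finset.add_sum_erase _ _ hjK]
        convert this using 2
        abel
      · have hK' : K ⊆ c.dirs := by
          intro a ha
          have h := hK ha
          have hne : a ≠ j := fun h => hjK (h ▸ ha)
          simpa [hne] using h
        refine le_trans ?_ (hwt K hK')
        have := hw (c.base + ∑ j ∈ K, Pi.single j 1) ?_ ?_
        · rw [sub_add_eq_add_sub]
          exact this
        · intro t
          have := hc t
          rw [Pi.add_apply, sum_single_apply]
          by_cases htK : t ∈ K
          · simp only [htK, hK' htK, if_true] at this ⊢
            omega
          · simp only [htK, if_false] at this ⊢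
            split_ifs at this <;> omega
        · rw [Pi.add_apply, sum_single_apply]
          simp only [hjK, if_false]
          omega
    · intro i
      by_cases hij : i = j
      · subst hij
        simp
        exact ⟨by linarith [h2.1], by linarith [h2.2]⟩
      · simpa [hij] using hxc i
    · simp [h5]
    · simp

lemma bottom_mem {s : ℕ} {w0 : (Fin s → ℤ) → ℤ} {T T' : Fin s → ℕ} {j : Fin s}
    (hT : ∀ t, t ≠ j → T t = T' t)
    {N : ℤ} {x : Fin s → ℝ} {c : Cub s} (hc : inRect T c) (hwt : wt w0 c ≤ N)
    (hxc : x ∈ cubeSet c) (hb : c.base j = T' j) :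
    Function.update x j (T' j : ℝ) ∈ SN w0 T' N := by
  rw [mem_SN]
  refine ⟨⟨c.base, c.dirs.erase j⟩, ?_, ?_, ?_⟩
  · intro i
    by_cases hij : i = j
    · subst hij
      simp [hb]
    · simpa [hij, ← hT i hij] using hc i
  · rw [wt_le_iff] at hwt ⊢
    intro K hK
    exact hwt K (hK.trans (Finset.erase_subset _ _))
  · intro i
    by_cases hij : i = j
    · subst hij
      simp [hb]
    · simpa [hij] using hxc i

lemma retract_mem {s : ℕ} {w0 : (Fin s → ℤ) → ℤ} {T T' : Fin s → ℕ} {j : Fin s}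
    (hj : T j = T' j + 1) (hT : ∀ t, t ≠ j → T t = T' t)
    (hw : ∀ l : Fin s → ℤ, (∀ t, 0 ≤ l t ∧ l t ≤ (T t : ℤ)) →
        l j = (T j : ℤ) → w0 (l - Pi.single j 1) ≤ w0 l)
    {N : ℤ} {x : Fin s → ℝ} (hx : x ∈ SN w0 T N) :
    Function.update x j (min (x j) (T' j : ℝ)) ∈ SN w0 T' N := by
  by_cases hxj : (T' j : ℝ) < x j
  · obtain ⟨c, hc, hwt, hxc, hb, -⟩ := exists_thick hj hw hx hxj
    rw [min_eq_right hxj.le]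
    exact bottom_mem hT hc hwt hxc hb
  · push Not at hxj
    rw [min_eq_left hxj, Function.update_eq_self]
    obtain ⟨c, hc, hwt, hxc⟩ := mem_SN.1 hx
    have h2 := (hxc j).1
    have h3 : c.base j ≤ (T' j : ℤ) := by
      have : ((c.base j : ℤ) : ℝ) ≤ ((T' j : ℤ) : ℝ) := by
        push_cast
        linarith
      exact_mod_cast this
    rcases h3.eq_or_lt with h3 | h3
    · have h4 : x j = T' j := by
        rw [h3] at h2
        push_cast at h2
        linarith
      have := bottom_mem hT hc hwt hxc h3
      rwa [← h4, Function.update_eq_self] at this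
    · refine mem_SN.2 ⟨c, ?_, hwt, hxc⟩
      intro i
      by_cases hij : i = j
      · subst hij
        refine ⟨(hc i).1, ?_⟩
        split_ifs <;> omega
      · simpa [← hT i hij] using hc i

lemma segment_mem {s : ℕ} {w0 : (Fin s → ℤ) → ℤ} {T T' : Fin s → ℕ} {j : Fin s}
    (hj : T j = T' j + 1)
    (hw : ∀ l : Fin s → ℤ, (∀ t, 0 ≤ l t ∧ l t ≤ (T t : ℤ)) →
        l j = (T j : ℤ) → w0 (l - Pi.single j 1) ≤ w0 l)
    {N : ℤ} {x : Fin s → ℝ} (hx : x ∈ SN w0 T N) {y : ℝ}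
    (hy1 : min (x j) (T' j : ℝ) ≤ y) (hy2 : y ≤ x j) :
    Function.update x j y ∈ SN w0 T N := by
  by_cases hxj : (T' j : ℝ) < x j
  · obtain ⟨c, hc, hwt, hxc, hb, hd⟩ := exists_thick hj hw hx hxj
    rw [min_eq_right hxj.le] at hy1
    refine mem_SN.2 ⟨c, hc, hwt, ?_⟩
    intro i
    have h := hxc i
    by_cases hij : i = j
    · subst hij
      simp only [hb, hd, if_true, Function.update_self] at h ⊢
      push_cast at h ⊢
      exact ⟨hy1, hy2.trans h.2⟩
    · simpa [hij] using h
  · push Not at hxj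
    rw [min_eq_left hxj] at hy1
    rw [le_antisymm hy2 hy1, Function.update_eq_self]
    exact hx

lemma one_step {s : ℕ} {w0 : (Fin s → ℤ) → ℤ} {T T' : Fin s → ℕ} {j : Fin s}
    (hj : T j = T' j + 1) (hT : ∀ t, t ≠ j → T t = T' t)
    (hw : ∀ l : Fin s → ℤ, (∀ t, 0 ≤ l t ∧ l t ≤ (T t : ℤ)) →
        l j = (T j : ℤ) → w0 (l - Pi.single j 1) ≤ w0 l) (N : ℤ) :
    ∃ hsub : SN w0 T' N ⊆ SN w0 T N,
      ∃ e : ContinuousMap.HomotopyEquiv (SN w0 T' N) (SN w0 T N),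
        ⇑e.toFun = Set.inclusion hsub := by
  have hsub : SN w0 T' N ⊆ SN w0 T N := by
    apply SN_mono
    intro i
    by_cases hij : i = j
    · subst hij
      omega
    · exact (hT i hij).ge
  have hle : ∀ x ∈ SN w0 T' N, x j ≤ T' j := by
    intro x hx
    obtain ⟨c, hc, -, hxc⟩ := mem_SN.1 hx
    have h1 := (hc j).2
    have h2 := (hxc j).2
    have h3 : ((c.base j + (if j ∈ c.dirs then 1 else 0) : ℤ) : ℝ) ≤ ((T' j : ℤ) : ℝ) := by
      exact_mod_cast h1
    push_cast at h3
    linarith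
  let r : C(SN w0 T N, SN w0 T' N) :=
    ⟨fun x => ⟨Function.update x.1 j (min (x.1 j) (T' j : ℝ)), retract_mem hj hT hw x.2⟩, by
      apply Continuous.subtype_mk
      have h1 : Continuous fun x : SN w0 T N => x.1 j :=
        (continuous_apply j).comp continuous_subtype_val
      exact Continuous.update continuous_subtype_val j (h1.min continuous_const)⟩
  let i : C(SN w0 T' N, SN w0 T N) := ⟨Set.inclusion hsub, continuous_inclusion hsub⟩
  refine ⟨hsub, ⟨i, r, ?_, ?_⟩, rfl⟩
  · have : r.comp i = ContinuousMap.id _ := by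
      ext1 x
      apply Subtype.ext
      change Function.update x.1 j (min (x.1 j) (T' j : ℝ)) = x.1
      rw [min_eq_left (hle x.1 x.2), Function.update_eq_self]
    rw [this]
  · refine ⟨⟨⟨fun p => ⟨Function.update p.2.1 j
        (min (p.2.1 j) (T' j : ℝ) + (p.1 : ℝ) * (p.2.1 j - min (p.2.1 j) (T' j : ℝ))),
        segment_mem hj hw p.2.2 ?_ ?_⟩, ?_⟩, ?_, ?_⟩⟩
    · have h := min_le_left (p.2.1 j) (T' j : ℝ)
      nlinarith [p.1.2.1]
    · have h := min_le_left (p.2.1 j) (T' j : ℝ)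
      nlinarith [p.1.2.2]
    · apply Continuous.subtype_mk
      have h0 : Continuous fun x : unitInterval × SN w0 T N => x.2.1 :=
        continuous_subtype_val.comp continuous_snd
      have h1 : Continuous fun x : unitInterval × SN w0 T N => x.2.1 j :=
        (continuous_apply j).comp h0
      have h2 : Continuous fun x : unitInterval × SN w0 T N => (x.1 : ℝ) :=
        continuous_subtype_val.comp continuous_fst
      have h3 := h1.min (continuous_const (y := (T' j : ℝ)))
      exact Continuous.update h0 j (h3.add (h2.mul (h1.sub h3)))
    · intro x
      apply Subtype.ext
      simp [r, i]
    · intro x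
      apply Subtype.ext
      simp

/-- if `R₂ ⊆ R₁` are rectangles connected by one-step coordinate
contractions along which `w0` is non-increasing, then for every `N` the inclusion
`S_N(R₂) ⊆ S_N(R₁)` is a homotopy equivalence. -/
theorem stmt10 (s : ℕ) (w0 : (Fin s → ℤ) → ℤ)
    (T₁ T₂ : Fin s → ℕ) (hTle : ∀ i, T₂ i ≤ T₁ i)
    (m : ℕ) (Ts : ℕ → (Fin s → ℕ))
    (h0 : Ts 0 = T₁) (hm : Ts m = T₂)
    (hstep : ∀ k < m, ∃ j : Fin s,
      (Ts k) j = (Ts (k + 1)) j + 1 ∧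
      (∀ t, t ≠ j → Ts k t = Ts (k + 1) t) ∧
      (∀ l : Fin s → ℤ, (∀ t, 0 ≤ l t ∧ l t ≤ ((Ts k) t : ℤ)) →
        l j = ((Ts k) j : ℤ) → w0 (l - Pi.single j 1) ≤ w0 l)) :
    ∀ N : ℤ, ∃ hsub : SN w0 T₂ N ⊆ SN w0 T₁ N,
      ∃ e : ContinuousMap.HomotopyEquiv (SN w0 T₂ N) (SN w0 T₁ N),
        ⇑e.toFun = Set.inclusion hsub := by
  intro N
  have key : ∀ k, k ≤ m → ∃ hsub : SN w0 (Ts k) N ⊆ SN w0 (Ts 0) N,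
      ∃ e : ContinuousMap.HomotopyEquiv (SN w0 (Ts k) N) (SN w0 (Ts 0) N),
        ⇑e.toFun = Set.inclusion hsub := by
    intro k
    induction k with
    | zero => exact fun _ => ⟨subset_rfl, ContinuousMap.HomotopyEquiv.refl _, rfl⟩
    | succ k ih =>
      intro hk
      obtain ⟨h1, e1, he1⟩ := ih (by omega)
      obtain ⟨j, hj, hT, hw⟩ := hstep k (by omega)
      obtain ⟨h2, e2, he2⟩ := one_step hj hT hw N
      refine ⟨h2.trans h1, e2.trans e1, ?_⟩
      change ⇑e1.toFun ∘ ⇑e2.toFun = _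
      rw [he1, he2]
      rfl
  have := key m le_rfl
  rw [h0, hm] at this
  exact this
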